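/- Let M be a Coxeter matrix on a finite set S with at least 3 elements such that for all s ≠ t either M s t = 0 or M s t ≥ 3 (large type), and such that there are no three pairwise distinct s, t, u ∈ S with M s t = M t u = M s u = 3 (hyperbolic type). If every automorphism of the Artin group A[M] lies in the subgroup Aut_Γ(A[M]) of Aut(A[M]) generated by the inner automorphisms, the graph-induced automorphisms, and the global inversion, then A[M] has property R_∞. -/

import Mathlib

/-- Two elements `g h` of a group `G` are `φ`-twisted conjugate if there is `x : G`
with `h = x * g * (φ x)⁻¹`. -/
def TwistedConj {G : Type*} [Group G] (φ : G ≃* G) (g h : G) : Prop :=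
  ∃ x : G, h = x * g * (φ x)⁻¹

/-- `R(φ) = ∞`: the set of `φ`-twisted conjugacy classes is infinite. -/
def ReidemeisterInfinite {G : Type*} [Group G] (φ : G ≃* G) : Prop :=
  Infinite (Quot (TwistedConj φ))

/-- A group `G` has property `R_∞` if `R(φ) = ∞` for every automorphism `φ` of `G`. -/
def PropertyRInfinity (G : Type*) [Group G] : Prop :=
  ∀ φ : G ≃* G, ReidemeisterInfinite φ

/-- `M` is a Coxeter matrix on `S`: symmetric, with `M s s = 1` and `M s t ≠ 1` off the
diagonal (the value `0` encodes the label `∞`). -/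
def IsCoxeterMatrix {S : Type*} (M : S → S → ℕ) : Prop :=
  (∀ s t, M s t = M t s) ∧ (∀ s, M s s = 1) ∧ (∀ s t, s ≠ t → M s t ≠ 1)

/-- The alternating word `Π(s,t,m) = s t s t ⋯` of length `m`, as an element
of the free group. -/
def altWord {S : Type*} (s t : S) (m : ℕ) : FreeGroup S :=
  ((List.range m).map (fun k => if k % 2 = 0 then FreeGroup.of s else FreeGroup.of t)).prod

/-- The Artin relations associated with a Coxeter matrix `M`: for every pair `s ≠ t`
with `M s t = m ≥ 2` the relation `Π(s,t,m) = Π(t,s,m)`; pairs with `M s t = 0`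
contribute no relation. -/
def artinRels {S : Type*} (M : S → S → ℕ) : Set (FreeGroup S) :=
  { r | ∃ s t : S, s ≠ t ∧ 2 ≤ M s t ∧
      r = altWord s t (M s t) * (altWord t s (M s t))⁻¹ }

/-- The Artin group of the Coxeter matrix `M`. -/
abbrev ArtinGroup {S : Type*} (M : S → S → ℕ) : Type _ := PresentedGroup (artinRels M)

/-- The image `t_s` in the Artin group of the standard generator `s`. -/
abbrev artinGen {S : Type*} (M : S → S → ℕ) (s : S) : ArtinGroup M :=
  PresentedGroup.of (rels := artinRels M) s

/-- The generating set of the subgroup `Aut_Γ(A[M]) ≤ Aut(A[M])`: inner automorphisms,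
graph-induced automorphisms (coming from label-preserving permutations of the
generators), and the global inversion. -/
def autGammaGens {S : Type*} (M : S → S → ℕ) : Set (MulAut (ArtinGroup M)) :=
  { ψ | (∃ a : ArtinGroup M, ∀ x : ArtinGroup M, ψ x = a * x * a⁻¹) ∨
        (∃ σ : Equiv.Perm S, (∀ s t : S, M (σ s) (σ t) = M s t) ∧
          ∀ s : S, ψ (artinGen M s) = artinGen M (σ s)) ∨
        (∀ s : S, ψ (artinGen M s) = (artinGen M s)⁻¹) }

namespace RInf

set_option linter.unusedSectionVars false

/-- Real growth lemma for a rank three reflection orbit. -/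
lemma growth (O : ℝ → ℝ → ℝ → Prop) (a b c C : ℝ) (ha : 1 ≤ a) (hb : 1 ≤ b) (hc : 1 ≤ c)
    (hgt : 1.4 ≤ a ∨ 1.4 ≤ b ∨ 1.4 ≤ c) (h0 : O 1 0 0)
    (h1 : ∀ x y z, O x y z → O (a * y + b * z - x) y z)
    (h2 : ∀ x y z, O x y z → O x (a * x + c * z - y) z)
    (h3 : ∀ x y z, O x y z → O x y (b * x + c * y - z))
    (b1 : ∀ x y z, O x y z → |2 * x - a * y - b * z| ≤ C)
    (b2 : ∀ x y z, O x y z → |2 * y - a * x - c * z| ≤ C)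
    (b3 : ∀ x y z, O x y z → |2 * z - b * x - c * y| ≤ C) : False := by
  have hm : ∀ p : ℝ, 1 ≤ p → ∀ w : ℝ, 0 ≤ w → w ≤ p * w := fun p hp w hw => by nlinarith
  have key : ∀ n : ℕ, ∃ x y z, O x y z ∧ (n : ℝ) ≤ x ∧ x ≤ y ∧ y + 1 ≤ z := by
    intro n
    induction n with
    | zero =>
      refine ⟨_, _, _, h3 _ _ _ (h2 _ _ _ h0), ?_, ?_, ?_⟩
      · simp
      · linarith
      · have := hm c hc a (by linarith)
        have e : a * 1 + c * 0 - 0 = a := by ring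
        rw [e]; linarith
    | succ n ih =>
      obtain ⟨x, y, z, hO, hx, hy, hz⟩ := ih
      have hn : (0 : ℝ) ≤ n := n.cast_nonneg
      have step1 := h1 _ _ _ hO
      have i1 : z + (y - x) ≤ a * y + b * z - x := by
        have := hm a ha y (by linarith)
        have := hm b hb z (by linarith)
        linarith
      generalize a * y + b * z - x = w at *
      have step2 := h2 _ _ _ step1
      have i2 : w + (z - y) ≤ a * w + c * z - y := by
        have := hm a ha w (by linarith)
        have := hm c hc z (by linarith)
        linarith
      generalize a * w + c * z - y = y' at *
      have step3 := h3 _ _ _ step2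
      have i3 : y' + (w - z) ≤ b * w + c * y' - z := by
        have := hm b hb w (by linarith)
        have := hm c hc y' (by linarith)
        linarith
      generalize b * w + c * y' - z = z' at *
      have step4 := h1 _ _ _ step3
      have i4 : z' + (y' - w) ≤ a * y' + b * z' - w := by
        have := hm a ha y' (by linarith)
        have := hm b hb z' (by linarith)
        linarith
      generalize a * y' + b * z' - w = w' at *
      have step5 := h2 _ _ _ step4
      have i5 : w' + (z' - y') ≤ a * w' + c * z' - y' := by
        have := hm a ha w' (by linarith)
        have := hm c hc z' (by linarith)
        linarith
      generalize a * w' + c * z' - y' = y'' at *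
      have step6 := h3 _ _ _ step5
      have i6 : y'' + (w' - z') ≤ b * w' + c * y'' - z' := by
        have := hm b hb w' (by linarith)
        have := hm c hc y'' (by linarith)
        linarith
      refine ⟨_, _, _, step6, ?_, ?_, ?_⟩
      · push_cast; linarith
      · linarith
      · linarith
  obtain ⟨n, hn⟩ := exists_nat_gt (5 * C)
  obtain ⟨x, y, z, hO, hx, hy, hz⟩ := key n
  have hn0 : (0 : ℝ) ≤ n := n.cast_nonneg
  have c1 := (abs_le.1 (b1 _ _ _ hO)).1
  have c2 := (abs_le.1 (b2 _ _ _ hO)).1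
  have c3 := (abs_le.1 (b3 _ _ _ hO)).1
  have c0 : 0 ≤ C := le_trans (abs_nonneg _) (b1 _ _ _ hO)
  have ax := mul_nonneg (sub_nonneg.2 ha) (show (0:ℝ) ≤ x by linarith)
  have ay := mul_nonneg (sub_nonneg.2 ha) (show (0:ℝ) ≤ y by linarith)
  have bx := mul_nonneg (sub_nonneg.2 hb) (show (0:ℝ) ≤ x by linarith)
  have bz := mul_nonneg (sub_nonneg.2 hb) (show (0:ℝ) ≤ z by linarith)
  have cy := mul_nonneg (sub_nonneg.2 hc) (show (0:ℝ) ≤ y by linarith)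
  have cz := mul_nonneg (sub_nonneg.2 hc) (show (0:ℝ) ≤ z by linarith)
  rcases hgt with h | h | h
  · have := mul_nonneg (sub_nonneg.2 h) (show (0:ℝ) ≤ x by linarith)
    have := mul_nonneg (sub_nonneg.2 h) (show (0:ℝ) ≤ y by linarith)
    linarith
  · have := mul_nonneg (sub_nonneg.2 h) (show (0:ℝ) ≤ x by linarith)
    have := mul_nonneg (sub_nonneg.2 h) (show (0:ℝ) ≤ z by linarith)
    linarith
  · have := mul_nonneg (sub_nonneg.2 h) (show (0:ℝ) ≤ y by linarith)
    have := mul_nonneg (sub_nonneg.2 h) (show (0:ℝ) ≤ z by linarith)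
    linarith

/-- Alternating products in a group. -/
def alt {G : Type*} [Group G] (a b : G) (m : ℕ) : G :=
  ((List.range m).map (fun k => if k % 2 = 0 then a else b)).prod

lemma alt_succ {G : Type*} [Group G] (a b : G) (m : ℕ) :
    alt a b (m + 1) = alt a b m * (if m % 2 = 0 then a else b) := by
  simp [alt, List.range_succ]

lemma alt_even {G : Type*} [Group G] (a b : G) (k : ℕ) : alt a b (2 * k) = (a * b) ^ k := by
  induction k with
  | zero => simp [alt]
  | succ k ih =>
    rw [show 2 * (k + 1) = 2 * k + 1 + 1 by ring, alt_succ, alt_succ, ih, pow_succ]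
    have h1 : (2 * k) % 2 = 0 := by omega
    have h2 : ¬ (2 * k + 1) % 2 = 0 := by omega
    rw [if_pos h1, if_neg h2, mul_assoc]

lemma alt_odd {G : Type*} [Group G] (a b : G) (k : ℕ) :
    alt a b (2 * k + 1) = (a * b) ^ k * a := by
  have h1 : (2 * k) % 2 = 0 := by omega
  rw [alt_succ, alt_even, if_pos h1]

lemma alt_eq {G : Type*} [Group G] (a b : G) (ha : a⁻¹ = a) (hb : b⁻¹ = b) (m : ℕ)
    (h : (a * b) ^ m = 1) : alt a b m * (alt b a m)⁻¹ = 1 := by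
  have hab : (b * a)⁻¹ = a * b := by rw [mul_inv_rev, ha, hb]
  obtain ⟨k, rfl | rfl⟩ := Nat.even_or_odd' m
  · rw [alt_even, alt_even, ← inv_pow, hab, ← pow_add, ← two_mul, h]
  · rw [alt_odd, alt_odd, mul_inv_rev, ← inv_pow, hab, hb]
    rw [← h, two_mul, add_assoc, pow_add, add_comm k 1, pow_add, pow_one]
    simp only [mul_assoc]

lemma lift_altWord {S G : Type*} [Group G] (r : S → G) (s t : S) (m : ℕ) :
    FreeGroup.lift r (altWord s t m) = alt (r s) (r t) m := by
  rw [altWord, alt, map_list_prod, List.map_map]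
  congr 2
  funext k
  simp only [Function.comp]
  split_ifs <;> simp

open Polynomial.Chebyshev in
lemma refl_pow {V : Type*} [AddCommGroup V] [Module ℝ V] {x y : V} {f g : Module.Dual ℝ V}
    (hf : f x = 2) (hg : g y = 2) (m : ℕ) (hm : 3 ≤ m)
    (h1 : f y = -2 * Real.cos (Real.pi / m)) (h2 : g x = -2 * Real.cos (Real.pi / m)) :
    (Module.reflection hf * Module.reflection hg) ^ m = 1 := by
  have hm0 : (0 : ℝ) < m := by exact_mod_cast (by omega : 0 < m)
  have hm3 : (3 : ℝ) ≤ m := by exact_mod_cast hm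
  set θ : ℝ := 2 * (Real.pi / m) with hθ
  have ht : 2 * Real.cos θ = f y * g x - 2 := by
    rw [h1, h2, hθ, Real.cos_two_mul]; ring
  have hs : Real.sin θ ≠ 0 := by
    apply ne_of_gt
    apply Real.sin_pos_of_pos_of_lt_pi
    · have := Real.pi_pos
      positivity
    · rw [hθ, ← mul_div_assoc, div_lt_iff₀ hm0]
      nlinarith [Real.pi_pos]
  have hS : ∀ n : ℤ, (S ℝ n).eval (2 * Real.cos θ) = Real.sin ((n + 1) * θ) / Real.sin θ := by
    intro n
    rw [eq_div_iff hs, S_two_mul_real_cos]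
  have hmθ : (m : ℝ) * θ = 2 * Real.pi := by rw [hθ]; field_simp
  ext z
  rw [Module.reflection_mul_reflection_pow_apply hf hg m z _ ht]
  obtain ⟨k, rfl | rfl⟩ := Nat.even_or_odd' m
  · have e1 : (((2 * k : ℕ) : ℤ) - 2) / 2 = k - 1 := by omega
    have e2 : (((2 * k : ℕ) : ℤ) - 1) / 2 = k - 1 := by omega
    have hz : (S ℝ ((k : ℤ) - 1)).eval (2 * Real.cos θ) = 0 := by
      rw [hS]
      have : (((k : ℤ) - 1 : ℤ) : ℝ) + 1 = k := by push_cast; ring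
      rw [this]
      have : (k : ℝ) * θ = Real.pi := by push_cast at hmθ; linarith
      rw [this]; simp
    rw [e1, e2, hz]; simp
  · have e1 : (((2 * k + 1 : ℕ) : ℤ) - 2) / 2 = k - 1 := by omega
    have e2 : (((2 * k + 1 : ℕ) : ℤ) - 1) / 2 = k := by omega
    have e3 : (((2 * k + 1 : ℕ) : ℤ) - 3) / 2 = k - 1 := by omega
    have e4 : (((2 * k + 1 : ℕ) : ℤ)) / 2 = k := by omega
    have hz : (S ℝ (k : ℤ)).eval (2 * Real.cos θ) + (S ℝ ((k : ℤ) - 1)).eval (2 * Real.cos θ)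
        = 0 := by
      rw [hS, hS]
      have h3 : (((k : ℤ) - 1 : ℤ) : ℝ) + 1 = k := by push_cast; ring
      have h4 : (((k : ℤ) : ℝ) + 1) * θ = 2 * Real.pi - k * θ := by
        push_cast at hmθ ⊢; linarith
      rw [h3, h4, Real.sin_two_pi_sub]; ring
    rw [e1, e2, e3, e4, hz]; simp

variable {S : Type*} [Fintype S]

/-- Entries of the Cartan matrix. -/
noncomputable def cf (M : S → S → ℕ) (s t : S) : ℝ :=
  if M s t = 0 then -2 else -2 * Real.cos (Real.pi / M s t)

/-- Simple coroots. -/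
noncomputable def fn (M : S → S → ℕ) (s : S) : Module.Dual ℝ (S → ℝ) :=
  ∑ t, cf M s t • LinearMap.proj t

lemma fn_apply (M : S → S → ℕ) (s : S) (v : S → ℝ) : fn M s v = ∑ t, cf M s t * v t := by
  simp [fn]

open Classical in
/-- Simple roots. -/
noncomputable def ev (s : S) : S → ℝ := Pi.single s 1

lemma fn_ev (M : S → S → ℕ) (s t : S) : fn M s (ev t) = cf M s t := by
  classical
  simp [fn_apply, ev, Pi.single_apply]

lemma fn_self (M : S → S → ℕ) (hM : IsCoxeterMatrix M) (s : S) : fn M s (ev s) = 2 := by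
  simp [fn_ev, cf, hM.2.1 s]

/-- Simple reflections. -/
noncomputable def rf (M : S → S → ℕ) (hM : IsCoxeterMatrix M) (s : S) :
    (S → ℝ) ≃ₗ[ℝ] (S → ℝ) := Module.reflection (fn_self M hM s)

lemma rf_apply (M : S → S → ℕ) (hM : IsCoxeterMatrix M) (s : S) (v : S → ℝ) :
    rf M hM s v = v - fn M s v • ev s := Module.reflection_apply _ _

lemma rf_inv (M : S → S → ℕ) (hM : IsCoxeterMatrix M) (s : S) :
    (rf M hM s)⁻¹ = rf M hM s := Module.reflection_inv _

/-- The reflection representation of the Artin group. -/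
noncomputable def rho (M : S → S → ℕ) (hM : IsCoxeterMatrix M)
    (hlarge : ∀ s t : S, s ≠ t → M s t = 0 ∨ 3 ≤ M s t) :
    ArtinGroup M →* ((S → ℝ) ≃ₗ[ℝ] (S → ℝ)) :=
  PresentedGroup.toGroup (f := rf M hM) (by
    rintro r ⟨s, t, hst, h2, rfl⟩
    rw [map_mul, map_inv, lift_altWord, lift_altWord]
    apply alt_eq _ _ (rf_inv M hM s) (rf_inv M hM t)
    have h3 : 3 ≤ M s t := by
      rcases hlarge s t hst with h | h <;> omega
    apply refl_pow _ _ _ h3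
    · rw [fn_ev, cf, if_neg (by omega)]
    · rw [fn_ev, cf, hM.1 t s, if_neg (by omega)])

lemma rho_gen (M : S → S → ℕ) (hM : IsCoxeterMatrix M)
    (hlarge : ∀ s t : S, s ≠ t → M s t = 0 ∨ 3 ≤ M s t) (s : S) :
    rho M hM hlarge (artinGen M s) = rf M hM s := by
  simp [rho, artinGen]

lemma cf_le (M : S → S → ℕ) (s t : S) (h : M s t = 0 ∨ 3 ≤ M s t) : 1 ≤ - cf M s t := by
  rw [cf]
  split_ifs with h0
  · norm_num
  · have h3 : (3 : ℝ) ≤ M s t := by exact_mod_cast h.resolve_left h0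
    have : Real.cos (Real.pi / 3) ≤ Real.cos (Real.pi / M s t) := by
      apply Real.cos_le_cos_of_nonneg_of_le_pi
      · have := Real.pi_pos; positivity
      · linarith [Real.pi_pos]
      · gcongr
    rw [Real.cos_pi_div_three] at this
    linarith

lemma cf_le' (M : S → S → ℕ) (s t : S) (h : M s t = 0 ∨ 3 ≤ M s t) (hn : M s t ≠ 3) :
    1.4 ≤ - cf M s t := by
  rw [cf]
  split_ifs with h0
  · norm_num
  · have h3 : (4 : ℝ) ≤ M s t := by
      have := h.resolve_left h0
      exact_mod_cast (by omega : 4 ≤ M s t)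
    have : Real.cos (Real.pi / 4) ≤ Real.cos (Real.pi / M s t) := by
      apply Real.cos_le_cos_of_nonneg_of_le_pi
      · have := Real.pi_pos; positivity
      · linarith [Real.pi_pos]
      · gcongr
    rw [Real.cos_pi_div_four] at this
    have h4 : (1.4 : ℝ) ≤ √2 := by
      apply Real.le_sqrt_of_sq_le; norm_num
    linarith

/-- The orbit of a simple root has unbounded pairing with the simple coroots. -/
lemma orbit_unbounded (M : S → S → ℕ) (hM : IsCoxeterMatrix M)
    (hlarge : ∀ s t : S, s ≠ t → M s t = 0 ∨ 3 ≤ M s t)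
    (hhyp : ¬ ∃ s t u : S, s ≠ t ∧ t ≠ u ∧ s ≠ u ∧ M s t = 3 ∧ M t u = 3 ∧ M s u = 3)
    (p q r : S) (hpq : p ≠ q) (hpr : p ≠ r) (hqr : q ≠ r) (C : ℝ)
    (hb : ∀ u (g : ArtinGroup M), |fn M u (rho M hM hlarge g (ev p))| ≤ C) : False := by
  have sym : ∀ s t, cf M s t = cf M t s := fun s t => by rw [cf, cf, hM.1 s t]
  have dg : ∀ s, cf M s s = 2 := fun s => by rw [← fn_ev, fn_self M hM]
  have val : ∀ u x y z, fn M u (x • ev p + y • ev q + z • ev r) =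
      cf M u p * x + cf M u q * y + cf M u r * z := by
    intro u x y z
    simp only [map_add, map_smul, fn_ev, smul_eq_mul]; ring
  have stp : ∀ u (g : ArtinGroup M) v, rho M hM hlarge g (ev p) = v →
      rho M hM hlarge (artinGen M u * g) (ev p) = v - fn M u v • ev u := by
    intro u g v h
    rw [map_mul, rho_gen, LinearEquiv.mul_apply, h, rf_apply]
  refine growth (fun x y z => ∃ g, rho M hM hlarge g (ev p) = x • ev p + y • ev q + z • ev r)
    (-cf M p q) (-cf M p r) (-cf M q r) C (cf_le _ _ _ (hlarge _ _ hpq))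
    (cf_le _ _ _ (hlarge _ _ hpr)) (cf_le _ _ _ (hlarge _ _ hqr)) ?_ ⟨1, by simp⟩
    ?_ ?_ ?_ ?_ ?_ ?_
  · by_contra! hcon
    apply hhyp
    refine ⟨p, q, r, hpq, hqr, hpr, ?_, ?_, ?_⟩
    · by_contra h; exact absurd (cf_le' _ _ _ (hlarge _ _ hpq) h) (not_le.2 hcon.1)
    · by_contra h; exact absurd (cf_le' _ _ _ (hlarge _ _ hqr) h) (not_le.2 hcon.2.2)
    · by_contra h; exact absurd (cf_le' _ _ _ (hlarge _ _ hpr) h) (not_le.2 hcon.2.1)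
  · rintro x y z ⟨g, hg⟩
    refine ⟨_, (stp p g _ hg).trans ?_⟩
    rw [val, dg]; module
  · rintro x y z ⟨g, hg⟩
    refine ⟨_, (stp q g _ hg).trans ?_⟩
    rw [val, dg, sym q p]; module
  · rintro x y z ⟨g, hg⟩
    refine ⟨_, (stp r g _ hg).trans ?_⟩
    rw [val, dg, sym r p, sym r q]; module
  · rintro x y z ⟨g, hg⟩
    have := hb p g
    rw [hg, val, dg] at this
    convert this using 2; ring
  · rintro x y z ⟨g, hg⟩
    have := hb q g
    rw [hg, val, dg, sym q p] at this
    convert this using 2; ring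
  · rintro x y z ⟨g, hg⟩
    have := hb r g
    rw [hg, val, dg, sym r p, sym r q] at this
    convert this using 2; ring

/-- Normal form of automorphisms in `Aut_Γ`. -/
lemma autGamma_form (M : S → S → ℕ) (ψ : MulAut (ArtinGroup M))
    (h : ψ ∈ Subgroup.closure (autGammaGens M)) :
    ∃ (a : ArtinGroup M) (σ : Equiv.Perm S), (∀ s t, M (σ s) (σ t) = M s t) ∧
      ∃ e : ℤˣ, ∀ s, ψ (artinGen M s) = a * artinGen M (σ s) ^ (e : ℤ) * a⁻¹ := by
  induction h using Subgroup.closure_induction with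
  | mem ψ h =>
    rcases h with ⟨a, h⟩ | ⟨σ, h1, h2⟩ | h
    · exact ⟨a, 1, fun _ _ => rfl, 1, fun s => by simp [h]⟩
    · exact ⟨1, σ, h1, 1, fun s => by simp [h2]⟩
    · exact ⟨1, 1, fun _ _ => rfl, -1, fun s => by simp [h]⟩
  | one => exact ⟨1, 1, fun _ _ => rfl, 1, fun s => by simp⟩
  | mul φ ψ _ _ h1 h2 =>
    obtain ⟨a, σ, hσ, e, h1⟩ := h1
    obtain ⟨b, τ, hτ, d, h2⟩ := h2
    refine ⟨φ b * a, σ * τ, fun s t => by simp [hσ, hτ], e * d, fun s => ?_⟩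
    rw [MulAut.mul_apply, h2, map_mul, map_mul, map_zpow, h1, conj_zpow, ← zpow_mul, map_inv]
    simp [mul_assoc]
  | inv φ _ h1 =>
    obtain ⟨a, σ, hσ, e, h1⟩ := h1
    refine ⟨(φ⁻¹ a)⁻¹, σ⁻¹, fun s t => by rw [← hσ]; simp, e, fun s => ?_⟩
    apply φ.injective
    have h := h1 (σ⁻¹ s)
    rw [map_mul, map_mul, map_zpow, h, conj_zpow, ← zpow_mul, inv_inv, map_inv,
      MulAut.apply_inv_self, MulAut.apply_inv_self]
    have : (e : ℤ) * e = 1 := by rw [← Units.val_mul, Int.units_mul_self]; rfl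
    rw [this]
    simp [mul_assoc]

/-- The permutation operator. -/
noncomputable def perm (σ : Equiv.Perm S) : (S → ℝ) ≃ₗ[ℝ] (S → ℝ) :=
  LinearEquiv.funCongrLeft ℝ ℝ σ⁻¹

lemma perm_apply (σ : Equiv.Perm S) (v : S → ℝ) (s : S) : perm σ v s = v (σ⁻¹ s) := rfl

lemma perm_ev (σ : Equiv.Perm S) (s : S) : perm σ (ev s) = ev (σ s) := by
  classical
  funext t
  rw [perm_apply]
  simp only [ev, Pi.single_apply, Equiv.Perm.inv_eq_iff_eq]

lemma perm_rf (M : S → S → ℕ) (hM : IsCoxeterMatrix M) (σ : Equiv.Perm S)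
    (hσ : ∀ s t, M (σ s) (σ t) = M s t) (s : S) :
    rf M hM (σ s) * perm σ = perm σ * rf M hM s := by
  ext1 v
  rw [LinearEquiv.mul_apply, LinearEquiv.mul_apply, rf_apply, rf_apply, map_sub, map_smul, perm_ev]
  congr 2
  rw [fn_apply, fn_apply, ← Equiv.sum_comp σ]
  refine Finset.sum_congr rfl fun t _ => ?_
  rw [perm_apply, cf, cf, hσ]
  simp

end RInf

/-- If a large-type, hyperbolic-type Artin group (on at least 3 generators) satisfies
`Aut(A[M]) = Aut_Γ(A[M])`, then it has property `R_∞`. -/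
theorem largeType_hyperbolicType_smallAut_propertyRInfinity
    {S : Type*} [Fintype S] (hcard : 3 ≤ Fintype.card S)
    (M : S → S → ℕ) (hM : IsCoxeterMatrix M)
    (hlarge : ∀ s t : S, s ≠ t → M s t = 0 ∨ 3 ≤ M s t)
    (hhyp : ¬ ∃ s t u : S, s ≠ t ∧ t ≠ u ∧ s ≠ u ∧ M s t = 3 ∧ M t u = 3 ∧ M s u = 3)
    (hsmall : ∀ ψ : MulAut (ArtinGroup M), ψ ∈ Subgroup.closure (autGammaGens M)) :
    PropertyRInfinity (ArtinGroup M) := by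
  intro φ
  obtain ⟨a, σ, hσ, e, hφ⟩ := RInf.autGamma_form M φ (hsmall φ)
  unfold ReidemeisterInfinite
  by_contra hfin
  rw [not_infinite_iff_finite] at hfin
  set ρ := RInf.rho M hM hlarge with hρ
  set P := RInf.perm σ with hP
  -- the twisted intertwining relation
  have hint : ∀ x, ρ (φ x) * (ρ a * P) = (ρ a * P) * ρ x := by
    have : (ρ.comp φ.toMonoidHom) =
        (MulAut.conj (ρ a * P)).toMonoidHom.comp ρ := by
      apply PresentedGroup.ext
      intro s
      have h1 : ρ (artinGen M (σ s)) ^ (e : ℤ) = RInf.rf M hM (σ s) := by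
        rw [hρ, RInf.rho_gen]
        rcases Int.units_eq_one_or e with rfl | rfl
        · simp
        · simp [RInf.rf_inv]
      have hp : P * RInf.rf M hM s = RInf.rf M hM (σ s) * P :=
        (RInf.perm_rf M hM σ hσ s).symm
      have h2 : ρ (φ (artinGen M s)) = (ρ a * P) * ρ (artinGen M s) * (ρ a * P)⁻¹ := by
        rw [hφ, map_mul, map_mul, map_zpow, h1, hρ, RInf.rho_gen, ← hρ, mul_assoc (ρ a) P,
          hp, map_inv]
        group
      simpa [mul_assoc] using h2
    intro x
    have h := DFunLike.congr_fun this x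
    have h2 : ρ (φ x) = (ρ a * P) * ρ x * (ρ a * P)⁻¹ := by simpa [mul_assoc] using h
    rw [h2]; group
  let tr : ((S → ℝ) ≃ₗ[ℝ] (S → ℝ)) → ℝ := fun A => LinearMap.trace ℝ (S → ℝ) A.toLinearMap
  have trc : ∀ A B, tr (A * B) = tr (B * A) := fun A B => LinearMap.trace_mul_comm ℝ _ _
  let F : Quot (TwistedConj φ) → ℝ := Quot.lift (fun g => tr (ρ g * (ρ a * P))) (by
    rintro g h ⟨x, rfl⟩
    show tr (ρ g * (ρ a * P)) = tr (ρ (x * g * (φ x)⁻¹) * (ρ a * P))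
    have h1 : ρ (φ x)⁻¹ * (ρ a * P) = (ρ a * P) * (ρ x)⁻¹ := by
      have := hint x⁻¹
      rwa [map_inv φ, map_inv ρ x] at this
    rw [map_mul, mul_assoc, h1, map_mul, mul_assoc (ρ x), trc (ρ x)]
    congr 1; group)
  obtain ⟨C, hC⟩ : ∃ C, ∀ q, |F q| ≤ C := by
    obtain ⟨C, hC⟩ := (Set.finite_range (fun q => |F q|)).bddAbove
    exact ⟨C, fun q => hC ⟨q, rfl⟩⟩
  have hb : ∀ g, |tr (ρ g * P)| ≤ C := by
    intro g
    have := hC (Quot.mk _ (g * a⁻¹))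
    have h2 : F (Quot.mk _ (g * a⁻¹)) = tr (ρ (g * a⁻¹) * (ρ a * P)) := rfl
    rw [h2, map_mul, map_inv] at this
    convert this using 3; group
  have hpair : ∀ s g, |RInf.fn M s (ρ g (RInf.ev (σ s)))| ≤ 2 * C := by
    intro s g
    have h1 := hb (artinGen M s * g)
    have h2 : tr (ρ (artinGen M s * g) * P) =
        tr (ρ g * P) - RInf.fn M s (ρ g (RInf.ev (σ s))) := by
      rw [map_mul, hρ, RInf.rho_gen, ← hρ, mul_assoc, trc]
      have : ((ρ g * P * RInf.rf M hM s : (S → ℝ) ≃ₗ[ℝ] (S → ℝ)) : (S → ℝ) →ₗ[ℝ] (S → ℝ)) =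
          ((ρ g * P : (S → ℝ) ≃ₗ[ℝ] (S → ℝ)) : (S → ℝ) →ₗ[ℝ] (S → ℝ)) -
            (RInf.fn M s).smulRight (ρ g (RInf.ev (σ s))) := by
        apply LinearMap.ext
        intro v
        simp only [LinearEquiv.coe_coe, LinearEquiv.mul_apply, LinearMap.sub_apply,
          LinearMap.smulRight_apply, RInf.rf_apply, map_sub, map_smul, hP, RInf.perm_ev]
      show LinearMap.trace ℝ (S → ℝ) _ = LinearMap.trace ℝ (S → ℝ) _ - _
      rw [this, map_sub, LinearMap.trace_smulRight]
    have h3 := hb g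
    rw [h2] at h1
    rw [abs_le] at *
    constructor <;> linarith
  obtain ⟨p, q, r, hpq, hpr, hqr⟩ := Fintype.two_lt_card_iff.1 (show 2 < Fintype.card S by omega)
  obtain ⟨s, rfl⟩ := σ.surjective p
  have hC0 : 0 ≤ C := le_trans (abs_nonneg _) (hb 1)
  refine RInf.orbit_unbounded M hM hlarge hhyp (σ s) q r hpq hpr hqr (4 * C) ?_
  intro u g
  have h1 := hpair s g
  by_cases hus : u = s
  · subst hus
    rw [← hρ]; linarith
  · have h2 := hpair s (artinGen M u * g)
    rw [map_mul, LinearEquiv.mul_apply, hρ, RInf.rho_gen, RInf.rf_apply, map_sub, map_smul,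
      RInf.fn_ev, smul_eq_mul] at h2
    rw [hρ] at h1
    have hc := RInf.cf_le M s u (hlarge s u (Ne.symm hus))
    generalize RInf.fn M u (RInf.rho M hM hlarge g (RInf.ev (σ s))) = X at *
    generalize RInf.fn M s (RInf.rho M hM hlarge g (RInf.ev (σ s))) = Y at *
    have h3 : |X * RInf.cf M s u| ≤ 4 * C := by
      rw [abs_le] at *
      constructor <;> linarith
    rw [abs_mul] at h3
    have h4 : 1 ≤ |RInf.cf M s u| := le_trans hc (neg_le_abs _)
    nlinarith [abs_nonneg X]
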